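/- arXiv:1207.3831 — 3 statements merged into one kernel-verified Lean document; each statement's English description precedes it below -/
import Mathlib

section
/- Let K₁ = {V ∈ H_d : V is positive semidefinite and rank(V) = 1}. There exists a Borel measurable map g : K₁ → ℂ^d∖{0} such that g(V)·g(V)* = V for every V ∈ K₁. Moreover, for every Borel measure ν on K₁ with ∫ min(1, tr(V)) ν(dV) < ∞, the pushforward measure μ = ν ∘ g^{-1} on ℂ^d satisfies ∫ min(1, ‖x‖²) μ(dx) = ∫ min(1, tr(V)) ν(dV) < ∞. -/
open MeasureTheory Matrix
open scoped ComplexOrder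

noncomputable section

/-- Borel (product) σ-algebra on complex matrices. -/
instance matrixMeasurableSpace {d q : ℕ} : MeasurableSpace (Matrix (Fin d) (Fin q) ℂ) :=
  inferInstanceAs (MeasurableSpace (Fin d → Fin q → ℂ))

/-- The outer product `xy*` of two complex column vectors. -/
def outer {d : ℕ} (x y : Fin d → ℂ) : Matrix (Fin d) (Fin d) ℂ :=
  Matrix.vecMulVec x (star y)

/-- Euclidean norm squared of a complex vector. -/
def cnormSq {d : ℕ} (x : Fin d → ℂ) : ℝ := ∑ i, Complex.normSq (x i)

/-- The cone of rank-one positive semidefinite Hermitian `d×d` matrices. -/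
def K1 (d : ℕ) : Set (Matrix (Fin d) (Fin d) ℂ) :=
  {V | V.PosSemidef ∧ V.rank = 1}

/-!
A positive semidefinite `V = (V j k)` of rank at most one satisfies `V j i * V i k = V j k * V i i`
and `V i k = conj (V k i)`. So if `V i i ≠ 0`, then the `i`-th column of `V` divided by `√(V i i)`
is a vector `x` with `x x* = V`; if the whole diagonal vanishes, then `tr V = 0` and `V = 0`.
For fixed `i` this vector is a measurable function of `V`, and finitely many such functions, each
with a measurable domain, can be glued. Finally `tr (x x*) = ‖x‖²` gives the identity of integrals.
-/

theorem exists_measurable_eq_of_countable_cover {κ α β : Type*} [MeasurableSpace α]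
    [MeasurableSpace β] [Countable κ] [Nonempty κ] {t : κ → Set α} {g : κ → α → β}
    (ht : ∀ i, MeasurableSet (t i)) (hg : ∀ i, Measurable (g i)) (hcover : ∀ a, ∃ i, a ∈ t i) :
    ∃ f : α → β, Measurable f ∧ ∀ a, ∃ i, a ∈ t i ∧ f a = g i a := by
  classical
  obtain ⟨e, he⟩ := exists_surjective_nat κ
  have hcover_nat : ∀ a, ∃ n, a ∈ t (e n) := fun a => he.exists.1 (hcover a)
  exact ⟨fun a => g (e (Nat.find (hcover_nat a))) a,
    Measurable.find (p := fun n a => a ∈ t (e n)) (fun n => hg (e n)) (fun n => ht (e n))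
      hcover_nat,
    fun a => ⟨_, Nat.find_spec (hcover_nat a), rfl⟩⟩

theorem exists_eq_vecMulVec_of_rank_le_one {m n K : Type*} [Fintype n] [Field K]
    {A : Matrix m n K} (hA : A.rank ≤ 1) : ∃ (u : m → K) (v : n → K), A = vecMulVec u v := by
  classical
  obtain ⟨u, hu⟩ := finrank_le_one_iff.1 hA
  choose v hv using fun k => hu ⟨A *ᵥ Pi.single k 1, LinearMap.mem_range_self A.mulVecLin _⟩
  refine ⟨u, v, Matrix.ext fun j k => ?_⟩
  have hcol : v k • (u : m → K) = A.col k := by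
    simpa only [mulVec_single_one, Submodule.coe_smul] using congrArg Subtype.val (hv k)
  rw [vecMulVec_apply, mul_comm]
  exact (congrFun hcol j).symm

theorem mul_apply_comm_of_rank_le_one {m n K : Type*} [Fintype n] [Field K]
    {A : Matrix m n K} (hA : A.rank ≤ 1) (i j : m) (k l : n) :
    A i k * A j l = A i l * A j k := by
  obtain ⟨u, v, rfl⟩ := exists_eq_vecMulVec_of_rank_le_one hA
  simp only [vecMulVec_apply]
  ring

section RankOneFactor

variable {ι 𝕜 Ω : Type*} [RCLike 𝕜]

/-- The `i`-th column of `A` divided by the square root of its `i`-th diagonal entry. For a positive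
semidefinite `A` of rank at most one it is a vector `x` with `x x* = A`, provided `A i i ≠ 0`; if
`A i i = 0`, division by zero makes it the zero vector. -/
def pivotColumn (A : Matrix ι ι 𝕜) (i : ι) : ι → 𝕜 :=
  fun j => A j i / (√(RCLike.re (A i i)) : 𝕜)

theorem measurable_pivotColumn [MeasurableSpace Ω] {V : Ω → Matrix ι ι 𝕜}
    (hV : ∀ j k, Measurable fun ω => V ω j k) (i : ι) :
    Measurable fun ω => pivotColumn (V ω) i :=
  measurable_pi_lambda _ fun j =>
    (hV j i).div (RCLike.measurable_ofReal.comp (RCLike.measurable_re.comp (hV i i)).sqrt)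

theorem eq_zero_of_posSemidef_of_diag_eq_zero [Finite ι] {A : Matrix ι ι 𝕜} (hA : A.PosSemidef)
    (hdiag : ∀ i, A i i = 0) : A = 0 := by
  have := Fintype.ofFinite ι
  exact hA.trace_eq_zero_iff.1 (Finset.sum_eq_zero fun i _ => hdiag i)

variable [Fintype ι]

theorem re_trace_vecMulVec_self_star (x : ι → 𝕜) :
    RCLike.re (vecMulVec x (star x)).trace = ∑ i, ‖x i‖ ^ 2 := by
  simp only [trace, diag_apply, vecMulVec_apply, Pi.star_apply, RCLike.star_def, RCLike.mul_conj,
    map_sum]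
  norm_cast

theorem lintegral_map_sum_norm_sq [MeasurableSpace Ω] {ν : Measure Ω} {V : Ω → Matrix ι ι 𝕜}
    {g : Ω → ι → 𝕜} (hg : AEMeasurable g ν)
    (hgV : ∀ᵐ ω ∂ν, vecMulVec (g ω) (star (g ω)) = V ω) {f : ℝ → ENNReal} (hf : Measurable f) :
    ∫⁻ x, f (∑ i, ‖x i‖ ^ 2) ∂(ν.map g) = ∫⁻ ω, f (RCLike.re (V ω).trace) ∂ν := by
  have hsum : Measurable fun x : ι → 𝕜 => f (∑ i, ‖x i‖ ^ 2) := hf.comp (by fun_prop)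
  calc ∫⁻ x, f (∑ i, ‖x i‖ ^ 2) ∂(ν.map g)
      = ∫⁻ ω, f (∑ i, ‖g ω i‖ ^ 2) ∂ν := lintegral_map' hsum.aemeasurable hg
    _ = ∫⁻ ω, f (RCLike.re (V ω).trace) ∂ν := by
        refine lintegral_congr_ae ?_
        filter_upwards [hgV] with ω hω
        rw [← hω, re_trace_vecMulVec_self_star]

theorem vecMulVec_pivotColumn_self_star {A : Matrix ι ι 𝕜} (hA : A.PosSemidef) (hrank : A.rank ≤ 1)
    {i : ι} (hi : A i i ≠ 0) : vecMulVec (pivotColumn A i) (star (pivotColumn A i)) = A := by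
  have hsqrt : (√(RCLike.re (A i i)) : 𝕜) * √(RCLike.re (A i i)) = A i i := by
    rw [← RCLike.ofReal_mul, Real.mul_self_sqrt (RCLike.nonneg_iff.1 hA.diag_nonneg).1,
      hA.isHermitian.coe_re_apply_self]
  ext j k
  calc vecMulVec (pivotColumn A i) (star (pivotColumn A i)) j k
      = A j i * A i k / A i i := by
        simp only [vecMulVec_apply, pivotColumn, Pi.star_apply, star_div₀, hA.isHermitian.apply,
          RCLike.star_def, RCLike.conj_ofReal, div_mul_div_comm, hsqrt]
    _ = A j k := by
        rw [mul_apply_comm_of_rank_le_one hrank, mul_div_cancel_right₀ _ hi]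

theorem exists_measurable_vecMulVec_self_star_eq [MeasurableSpace Ω] {V : Ω → Matrix ι ι 𝕜}
    (hV : ∀ j k, Measurable fun ω => V ω j k) :
    ∃ g : Ω → ι → 𝕜, Measurable g ∧
      ∀ ω, (V ω).PosSemidef → (V ω).rank ≤ 1 → vecMulVec (g ω) (star (g ω)) = V ω := by
  let domain : Option ι → Set Ω := fun o =>
    o.elim (⋂ i, {ω | V ω i i = 0}) fun i => {ω | V ω i i ≠ 0}
  let column : Option ι → Ω → ι → 𝕜 := fun o => o.elim 0 fun i ω => pivotColumn (V ω) i
  have hzero : ∀ i, MeasurableSet {ω | V ω i i = 0} := fun i =>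
    hV i i (measurableSet_singleton 0)
  have hdomain : ∀ o, MeasurableSet (domain o) := by
    rintro (_ | i)
    · exact MeasurableSet.iInter hzero
    · exact (hzero i).compl
  have hcolumn : ∀ o, Measurable (column o) := by
    rintro (_ | i)
    · exact measurable_const
    · exact measurable_pivotColumn hV i
  have hcover : ∀ ω, ∃ o, ω ∈ domain o := fun ω => by
    by_cases hdiag : ∀ i, V ω i i = 0
    · exact ⟨none, Set.mem_iInter.2 hdiag⟩
    · exact (not_forall.1 hdiag).imp' some fun _ hi => hi
  obtain ⟨g, hg, hgcolumn⟩ := exists_measurable_eq_of_countable_cover hdomain hcolumn hcover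
  refine ⟨g, hg, fun ω hpsd hrank => ?_⟩
  obtain ⟨_ | i, hω, hgω⟩ := hgcolumn ω
  · have hdiag : ∀ i, V ω i i = 0 := fun i => Set.mem_iInter.1 hω i
    rw [hgω, eq_zero_of_posSemidef_of_diag_eq_zero hpsd hdiag]
    exact zero_vecMulVec _
  · rw [hgω]
    exact vecMulVec_pivotColumn_self_star hpsd hrank hω

theorem measurable_selection_of_rank_one_psd_general [MeasurableSpace Ω] {V : Ω → Matrix ι ι 𝕜}
    (hV : ∀ j k, Measurable fun ω => V ω j k) :
    ∃ g : Ω → ι → 𝕜, Measurable g ∧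
      (∀ ω, (V ω).PosSemidef → (V ω).rank ≤ 1 → vecMulVec (g ω) (star (g ω)) = V ω) ∧
      ∀ ν : Measure Ω, (∀ᵐ ω ∂ν, (V ω).PosSemidef ∧ (V ω).rank ≤ 1) →
        ∀ f : ℝ → ENNReal, Measurable f →
          ∫⁻ x, f (∑ i, ‖x i‖ ^ 2) ∂(ν.map g) = ∫⁻ ω, f (RCLike.re (V ω).trace) ∂ν := by
  obtain ⟨g, hg, hgV⟩ := exists_measurable_vecMulVec_self_star_eq hV
  exact ⟨g, hg, hgV, fun ν hν f hf =>
    lintegral_map_sum_norm_sq hg.aemeasurable (hν.mono fun ω hω => hgV ω hω.1 hω.2) hf⟩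

end RankOneFactor

theorem measurable_matrix_apply {d q : ℕ} (i : Fin d) (j : Fin q) :
    Measurable fun V : Matrix (Fin d) (Fin q) ℂ => V i j :=
  (measurable_pi_apply j).comp (measurable_pi_apply (X := fun _ => Fin q → ℂ) i)

theorem cnormSq_eq_sum_norm_sq {d : ℕ} (x : Fin d → ℂ) : cnormSq x = ∑ i, ‖x i‖ ^ 2 :=
  Finset.sum_congr rfl fun i _ => Complex.normSq_eq_norm_sq (x i)

theorem ne_zero_of_outer_self_mem_K1 {d : ℕ} {x : Fin d → ℂ} (hx : outer x x ∈ K1 d) : x ≠ 0 := by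
  rintro rfl
  simp [K1, outer] at hx

/-- There is a Borel measurable selection `g` with `g(V)g(V)* = V` on
the rank-one positive semidefinite matrices, and for every measure `ν` on `K₁` with
`∫ min(1, tr V) ν(dV) < ∞` the pushforward `μ = ν ∘ g⁻¹` satisfies
`∫ min(1,‖x‖²) μ(dx) = ∫ min(1, tr V) ν(dV) < ∞`. -/
theorem measurable_selection_of_rank_one_psd
    (d : ℕ) :
    ∃ g : Matrix (Fin d) (Fin d) ℂ → (Fin d → ℂ),
      Measurable g ∧
      (∀ V ∈ K1 d, g V ≠ 0 ∧ outer (g V) (g V) = V) ∧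
      ∀ ν : Measure (Matrix (Fin d) (Fin d) ℂ), ν (K1 d)ᶜ = 0 →
        (∫⁻ V, ENNReal.ofReal (min 1 (V.trace.re)) ∂ν < ⊤) →
        (∫⁻ x, ENNReal.ofReal (min 1 (cnormSq x)) ∂(ν.map g) =
          ∫⁻ V, ENNReal.ofReal (min 1 (V.trace.re)) ∂ν) ∧
        (∫⁻ x, ENNReal.ofReal (min 1 (cnormSq x)) ∂(ν.map g) < ⊤) := by
  obtain ⟨g, hg, hgV, hgν⟩ :=
    measurable_selection_of_rank_one_psd_general (V := id) (measurable_matrix_apply (d := d))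
  refine ⟨g, hg, fun V hV => ?_, fun ν hν hfin => ?_⟩
  · have hself : outer (g V) (g V) = V := hgV V hV.1 hV.2.le
    exact ⟨ne_zero_of_outer_self_mem_K1 (hself.symm ▸ hV), hself⟩
  · have hK1 : ∀ᵐ V ∂ν, V ∈ K1 d := hν
    simp_rw [cnormSq_eq_sum_norm_sq]
    have heq := hgν ν (hK1.mono fun V hV => ⟨hV.1, hV.2.le⟩)
      (fun r => ENNReal.ofReal (min 1 r)) (by fun_prop)
    exact ⟨heq, heq.trans_lt hfin⟩
end
end

section
/- Let d ≥ 1 and let u be a random vector uniformly distributed on the unit sphere of ℂ^d (law σ_d). Then for every d×d complex Hermitian matrix Θ, the quadratic form u*Θu is real and E[(u*Θu)²] = (tr(Θ²) + (tr(Θ))²) / (d(d+1)). Equivalently, d·E[|tr(Θ·uu*)|²] = (tr(Θ²) + (tr(Θ))²)/(d+1). -/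
open MeasureTheory Matrix
open scoped ComplexOrder

noncomputable section

/-- The unit sphere `{x ∈ ℂ^d : ‖x‖ = 1}`. -/
def unitSphere (d : ℕ) : Set (Fin d → ℂ) := {x | cnormSq x = 1}

/-- `σ` is the uniform (rotation-invariant) probability measure `σ_d` on the unit
sphere of `ℂ^d`. -/
def IsUniformSphereMeasure (d : ℕ) (σ : Measure (Fin d → ℂ)) : Prop :=
  IsProbabilityMeasure σ ∧ σ (unitSphere d)ᶜ = 0 ∧
  ∀ U : Matrix.unitaryGroup (Fin d) ℂ,
    σ.map (fun x => Matrix.mulVec (U : Matrix (Fin d) (Fin d) ℂ) x) = σ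

/-!
Unitary operators act transitively on each sphere, so unitary invariance of `μ` alone gives a
constant `κ` with `∫ |⟪v, x⟫|⁴ dμ = κ ‖v‖⁴`. Polarizing over `v ± w` and `v ± i w` turns this into
`∫ |⟪v, x⟫|² |⟪w, x⟫|² dμ = κ / 2 * (‖v‖² ‖w‖² + |⟪v, w⟫|²)`, the case `S = v v*`, `T = w w*` of
`∫ ⟪x, S x⟫ ⟪x, T x⟫ dμ = κ / 2 * (tr S * tr T + tr (S T))`. Both sides are bilinear and the
rank-one operators `v v*` span all operators over `ℂ`, so the identity holds for all `S` and `T`;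
the case `S = T = 1` determines `κ`.
-/

open InnerProductSpace Module

lemma integrable_of_homogeneous {𝕜 E F : Type*} [RCLike 𝕜] [NormedAddCommGroup E]
    [NormedSpace 𝕜 E] [ProperSpace E] [MeasurableSpace E] [BorelSpace E] [NormedAddCommGroup F]
    [SecondCountableTopologyEither E F] {μ : Measure E} {n : ℕ} {f : E → F}
    (hμ : Integrable (fun x ↦ ‖x‖ ^ n) μ) (hf : Continuous f)
    (hom : ∀ (c : 𝕜) x, ‖f (c • x)‖ = ‖c‖ ^ n * ‖f x‖) : Integrable f μ := by
  obtain ⟨C, hC⟩ :=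
    (isCompact_closedBall (0 : E) 1).exists_bound_of_continuousOn hf.continuousOn
  refine (hμ.mul_const C).mono' hf.aestronglyMeasurable (.of_forall fun x ↦ ?_)
  set y : E := (‖x‖⁻¹ : 𝕜) • x
  have hy : ‖y‖ ≤ 1 := by
    simpa [y, norm_smul] using inv_mul_le_one
  have hxy : (‖x‖ : 𝕜) • y = x := by
    rcases eq_or_ne x 0 with rfl | hx
    · simp [y]
    · exact smul_inv_smul₀ (by simpa using hx) x
  calc ‖f x‖ = ‖x‖ ^ n * ‖f y‖ := by rw [← hxy, hom, hxy]; simp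
    _ ≤ ‖x‖ ^ n * C := by gcongr; exact hC y (by simpa using hy)

section RCLike

variable {𝕜 E : Type*} [RCLike 𝕜] [NormedAddCommGroup E] [InnerProductSpace 𝕜 E]

lemma exists_linearIsometryEquiv_apply_eq [FiniteDimensional 𝕜 E] {v w : E} (h : ‖v‖ = ‖w‖) :
    ∃ U : E ≃ₗᵢ[𝕜] E, U v = w := by
  rcases eq_or_ne v 0 with rfl | hv
  · exact ⟨.refl 𝕜 E, (norm_eq_zero.1 (h.symm.trans norm_zero)).symm⟩
  have hw : w ≠ 0 := norm_ne_zero_iff.1 (h ▸ norm_ne_zero_iff.2 hv)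
  let e := LinearIsometryEquiv.toSpanUnitSingleton (𝕜 := 𝕜) _ (norm_smul_inv_norm (𝕜 := 𝕜) hv)
  let e' := LinearIsometryEquiv.toSpanUnitSingleton (𝕜 := 𝕜) _ (norm_smul_inv_norm (𝕜 := 𝕜) hw)
  let L := ((Submodule.subtypeₗᵢ _).comp e'.toLinearIsometry).comp e.symm.toLinearIsometry
  refine ⟨L.extend.toLinearIsometryEquiv rfl, ?_⟩
  calc L.extend v = L.extend (e ‖v‖ : E) := by
        congr 1
        exact (smul_inv_smul₀ (by simpa using hv) v).symm
    _ = (‖v‖ : 𝕜) • (‖w‖ : 𝕜)⁻¹ • w := by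
        rw [L.extend_apply]
        simp only [L, LinearIsometry.coe_comp, Submodule.coe_subtypeₗᵢ, Submodule.coe_subtype,
          LinearIsometryEquiv.coe_toLinearIsometry, Function.comp_apply,
          LinearIsometryEquiv.symm_apply_apply]
        simp [e']
    _ = w := by rw [h]; exact smul_inv_smul₀ (by simpa using hw) w

lemma inner_mul_symm_eq_norm_sq (v w : E) :
    inner 𝕜 v w * inner 𝕜 w v = ((‖inner 𝕜 v w‖ ^ 2 : ℝ) : 𝕜) := by
  rw [← inner_conj_symm w v, RCLike.mul_conj, RCLike.ofReal_pow]

lemma inner_rankOne_self_apply (v x : E) :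
    inner 𝕜 x (rankOne 𝕜 v v x) = ((‖inner 𝕜 v x‖ ^ 2 : ℝ) : 𝕜) := by
  rw [inner_right_rankOne_apply, mul_comm, inner_mul_symm_eq_norm_sq]

lemma integrable_inner_mul_inner [ProperSpace E] [MeasurableSpace E] [BorelSpace E]
    {μ : Measure E} (hμ : Integrable (fun x ↦ ‖x‖ ^ 4) μ) (S T : E →L[𝕜] E) :
    Integrable (fun x ↦ inner 𝕜 x (S x) * inner 𝕜 x (T x)) μ :=
  integrable_of_homogeneous (𝕜 := 𝕜) hμ (by fun_prop) fun c x ↦ by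
    simp only [map_smul, inner_smul_left, inner_smul_right, norm_mul, RCLike.norm_conj]
    ring

end RCLike

lemma span_range_rankOne_self {E : Type*} [NormedAddCommGroup E] [InnerProductSpace ℂ E]
    [FiniteDimensional ℂ E] :
    Submodule.span ℂ (Set.range fun v : E ↦ rankOne ℂ v v) = ⊤ := by
  have := FiniteDimensional.complete ℂ E
  rw [eq_top_iff, ← CStarAlgebra.span_nonneg, Submodule.span_le]
  intro T hT
  obtain ⟨m, u, rfl⟩ := ContinuousLinearMap.isPositive_iff_eq_sum_rankOne.1
    ((ContinuousLinearMap.nonneg_iff_isPositive T).1 hT)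
  exact sum_mem fun i _ ↦ Submodule.subset_span ⟨u i, rfl⟩

lemma sum_norm_pow_four_polarization {E : Type*} [SeminormedAddCommGroup E]
    [InnerProductSpace ℂ E] (a b : E) :
    ‖a + b‖ ^ 4 + ‖a - b‖ ^ 4 + ‖a + Complex.I • b‖ ^ 4 + ‖a - Complex.I • b‖ ^ 4 =
      4 * (‖a‖ ^ 2 + ‖b‖ ^ 2) ^ 2 + 8 * ‖inner ℂ a b‖ ^ 2 := by
  have hI : ‖Complex.I • b‖ = ‖b‖ := by simp [norm_smul]
  have hre : RCLike.re (inner ℂ a (Complex.I • b)) = -(inner ℂ a b).im := by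
    simp [inner_smul_right]
  have hsq (x : E) : ‖x‖ ^ 4 = (‖x‖ ^ 2) ^ 2 := by ring
  simp only [hsq, norm_add_sq (𝕜 := ℂ), norm_sub_sq (𝕜 := ℂ), hI, hre, Complex.sq_norm,
    Complex.normSq_apply, RCLike.re_eq_complex_re]
  ring

/-- A measure on a complex inner product space is unitarily invariant if every unitary operator,
encoded as a linear isometric automorphism, preserves it. -/
def IsUnitarilyInvariant {E : Type*} [NormedAddCommGroup E] [InnerProductSpace ℂ E]
    [MeasurableSpace E] (μ : Measure E) : Prop :=
  ∀ U : E ≃ₗᵢ[ℂ] E, MeasurePreserving U μ μ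

namespace IsUnitarilyInvariant

variable {E : Type*} [NormedAddCommGroup E] [InnerProductSpace ℂ E] [FiniteDimensional ℂ E]
  [MeasurableSpace E] [BorelSpace E] {μ : Measure E}

lemma exists_integral_norm_inner_pow (hμ : IsUnitarilyInvariant μ) (n : ℕ) :
    ∃ κ : ℝ, ∀ v : E, ∫ x, ‖inner ℂ v x‖ ^ n ∂μ = κ * ‖v‖ ^ n := by
  rcases subsingleton_or_nontrivial E with hE | hE
  · refine ⟨∫ x, ‖inner ℂ (0 : E) x‖ ^ n ∂μ, fun v ↦ ?_⟩
    rw [Subsingleton.elim v 0]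
    cases n <;> simp
  obtain ⟨e, he⟩ := exists_norm_eq E zero_le_one
  refine ⟨∫ x, ‖inner ℂ e x‖ ^ n ∂μ, fun v ↦ ?_⟩
  have hev : ‖(‖v‖ : ℂ) • e‖ = ‖v‖ := by simp [norm_smul, he]
  obtain ⟨U, hU⟩ := exists_linearIsometryEquiv_apply_eq (𝕜 := ℂ) hev
  have hpt (x : E) : ‖inner ℂ v (U x)‖ = ‖inner ℂ e x‖ * ‖v‖ := by
    conv_lhs => rw [← hU, U.inner_map_map]
    simp [mul_comm]
  calc ∫ x, ‖inner ℂ v x‖ ^ n ∂μ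
      = ∫ x, ‖inner ℂ v (U x)‖ ^ n ∂μ :=
        ((hμ U).integral_comp U.toHomeomorph.measurableEmbedding _).symm
    _ = ∫ x, ‖inner ℂ e x‖ ^ n * ‖v‖ ^ n ∂μ := by simp only [hpt, mul_pow]
    _ = (∫ x, ‖inner ℂ e x‖ ^ n ∂μ) * ‖v‖ ^ n := integral_mul_const _ _

lemma exists_integral_norm_inner_sq_mul_norm_inner_sq (hμ : IsUnitarilyInvariant μ)
    (hint : Integrable (fun x ↦ ‖x‖ ^ 4) μ) :
    ∃ κ : ℝ, ∀ v w : E, ∫ x, ‖inner ℂ v x‖ ^ 2 * ‖inner ℂ w x‖ ^ 2 ∂μ =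
      κ * (‖v‖ ^ 2 * ‖w‖ ^ 2 + ‖inner ℂ v w‖ ^ 2) := by
  have := FiniteDimensional.proper ℂ E
  obtain ⟨κ, hκ⟩ := hμ.exists_integral_norm_inner_pow 4
  have hint' (v : E) : Integrable (fun x ↦ ‖inner ℂ v x‖ ^ 4) μ :=
    integrable_of_homogeneous (𝕜 := ℂ) hint (by fun_prop) fun c x ↦ by simp [mul_pow]
  refine ⟨κ / 2, fun v w ↦ ?_⟩
  have hpt (x : E) : ‖inner ℂ v x‖ ^ 2 * ‖inner ℂ w x‖ ^ 2 =
      (‖inner ℂ (v + w) x‖ ^ 4 + ‖inner ℂ (v - w) x‖ ^ 4 +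
        ‖inner ℂ (v + Complex.I • w) x‖ ^ 4 + ‖inner ℂ (v - Complex.I • w) x‖ ^ 4 -
        4 * ‖inner ℂ v x‖ ^ 4 - 4 * ‖inner ℂ w x‖ ^ 4) / 16 := by
    have := sum_norm_pow_four_polarization (inner ℂ x v) (inner ℂ x w)
    simp only [← inner_add_right, ← inner_sub_right, ← inner_smul_right_eq_smul, norm_inner_symm x,
      norm_mul, RCLike.inner_apply, RCLike.norm_conj] at this
    linarith
  simp only [hpt]
  rw [integral_div, integral_sub, integral_sub, integral_add, integral_add, integral_add,
    integral_const_mul, integral_const_mul]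
  · simp only [hκ]
    linear_combination (κ / 16) * sum_norm_pow_four_polarization v w
  all_goals fun_prop (disch := exact hint' _)

lemma exists_integral_inner_mul_inner (hμ : IsUnitarilyInvariant μ)
    (hint : Integrable (fun x ↦ ‖x‖ ^ 4) μ) :
    ∃ κ : ℝ, ∀ S T : E →L[ℂ] E, ∫ x, inner ℂ x (S x) * inner ℂ x (T x) ∂μ =
      κ * (S.trace ℂ E * T.trace ℂ E + (S * T).trace ℂ E) := by
  have := FiniteDimensional.proper ℂ E
  obtain ⟨κ, hκ⟩ := hμ.exists_integral_norm_inner_sq_mul_norm_inner_sq hint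
  have mem_span (S : E →L[ℂ] E) : S ∈ Submodule.span ℂ (Set.range fun v : E ↦ rankOne ℂ v v) :=
    span_range_rankOne_self (E := E) ▸ Submodule.mem_top
  refine ⟨κ, fun S T ↦ ?_⟩
  induction mem_span S, mem_span T using Submodule.span_induction₂ with
  | mem_mem S T hS hT =>
    obtain ⟨v, rfl⟩ := hS
    obtain ⟨w, rfl⟩ := hT
    simp only [inner_rankOne_self_apply, ← RCLike.ofReal_mul]
    rw [integral_ofReal, hκ, ContinuousLinearMap.mul_def, rankOne_comp_rankOne]
    have hvw : inner ℂ v w * inner ℂ w v = (‖inner ℂ v w‖ : ℂ) ^ 2 :=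
      mod_cast inner_mul_symm_eq_norm_sq v w
    simp [trace_rankOne, hvw]
  | zero_left T => simp
  | zero_right S => simp
  | add_left S S' T _ _ _ hS hS' =>
    simp only [_root_.add_apply, inner_add_right, add_mul]
    rw [integral_add (integrable_inner_mul_inner hint S T)
      (integrable_inner_mul_inner hint S' T), hS, hS']
    simp only [ContinuousLinearMap.toLinearMap_mul, ContinuousLinearMap.toLinearMap_add,
      add_mul, map_add]
    ring
  | add_right S T T' _ _ _ hT hT' =>
    simp only [_root_.add_apply, inner_add_right, mul_add]
    rw [integral_add (integrable_inner_mul_inner hint S T)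
      (integrable_inner_mul_inner hint S T'), hT, hT']
    simp only [ContinuousLinearMap.toLinearMap_mul, ContinuousLinearMap.toLinearMap_add,
      mul_add, map_add]
    ring
  | smul_left c S T _ _ h =>
    simp only [_root_.smul_apply, inner_smul_right, mul_assoc, integral_const_mul, h,
      ContinuousLinearMap.toLinearMap_mul, ContinuousLinearMap.toLinearMap_smul, map_smul,
      smul_eq_mul, smul_mul_assoc]
    ring
  | smul_right c S T _ _ h =>
    simp only [_root_.smul_apply, inner_smul_right, mul_left_comm _ c, integral_const_mul, h,
      ContinuousLinearMap.toLinearMap_mul, ContinuousLinearMap.toLinearMap_smul, map_smul,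
      smul_eq_mul, mul_smul_comm]
    ring

lemma integral_inner_mul_inner (hμ : IsUnitarilyInvariant μ)
    (hint : Integrable (fun x ↦ ‖x‖ ^ 4) μ) (S T : E →L[ℂ] E) :
    (finrank ℂ E * (finrank ℂ E + 1)) * ∫ x, inner ℂ x (S x) * inner ℂ x (T x) ∂μ =
      (S.trace ℂ E * T.trace ℂ E + (S * T).trace ℂ E) *
        ((∫ x, ‖x‖ ^ 4 ∂μ : ℝ) : ℂ) := by
  obtain ⟨κ, hκ⟩ := hμ.exists_integral_inner_mul_inner hint
  have hnorm : ((∫ x, ‖x‖ ^ 4 ∂μ : ℝ) : ℂ) = κ * (finrank ℂ E ^ 2 + finrank ℂ E) := by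
    have h := hκ 1 1
    have hpow (x : E) : (‖x‖ : ℂ) ^ 2 * (‖x‖ : ℂ) ^ 2 = ((‖x‖ ^ 4 : ℝ) : ℂ) := by
      push_cast; ring
    simp only [one_apply_eq_self, inner_self_eq_norm_sq_to_K, RCLike.ofReal_eq_complex_ofReal,
      hpow, integral_complex_ofReal] at h
    simpa [sq] using h
  rw [hnorm, hκ]
  ring

end IsUnitarilyInvariant

lemma ofReal_re_trace_of_isHermitian {ι : Type*} [Fintype ι] {A : Matrix ι ι ℂ}
    (hA : A.IsHermitian) : (A.trace.re : ℂ) = A.trace :=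
  Complex.conj_eq_iff_re.1 (by rw [starRingEnd_apply, ← trace_conjTranspose, hA.eq])

section EuclideanSpace

variable {ι : Type*} [Fintype ι] [DecidableEq ι]

lemma trace_toEuclideanCLM (A : Matrix ι ι ℂ) :
    (toEuclideanCLM (𝕜 := ℂ) A).trace ℂ (EuclideanSpace ℂ ι) = A.trace := by
  rw [coe_toEuclideanCLM_eq_toEuclideanLin, toEuclideanLin_eq_toLin_orthonormal, trace_toLin_eq]

lemma inner_toLp_toEuclideanCLM_toLp (A : Matrix ι ι ℂ) (x : ι → ℂ) :
    inner ℂ (WithLp.toLp 2 x) (toEuclideanCLM (𝕜 := ℂ) A (WithLp.toLp 2 x)) =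
      star x ⬝ᵥ A *ᵥ x := by
  rw [toEuclideanCLM_toLp, EuclideanSpace.inner_toLp_toLp, dotProduct_comm]

lemma exists_unitaryGroup_apply_toLp_eq
    (U : EuclideanSpace ℂ ι ≃ₗᵢ[ℂ] EuclideanSpace ℂ ι) :
    ∃ V : unitaryGroup ι ℂ, ∀ x, U (WithLp.toLp 2 x) = WithLp.toLp 2 (V.1 *ᵥ x) := by
  let V := Unitary.linearIsometryEquiv.symm U
  let φ := (toEuclideanCLM (n := ι) (𝕜 := ℂ)).symm
  refine ⟨⟨φ V, Unitary.map_mem φ V.2⟩, fun x ↦ ?_⟩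
  rw [← toEuclideanCLM_toLp]
  simp [φ, V]

lemma isUnitarilyInvariant_map_toLp {σ : Measure (ι → ℂ)}
    (hσ : ∀ V : unitaryGroup ι ℂ, σ.map (fun x ↦ V.1 *ᵥ x) = σ) :
    IsUnitarilyInvariant (σ.map (WithLp.toLp 2)) := by
  intro U
  obtain ⟨V, hV⟩ := exists_unitaryGroup_apply_toLp_eq U
  have hVm : Measurable fun x : ι → ℂ ↦ V.1 *ᵥ x := by fun_prop
  refine ⟨U.continuous.measurable, ?_⟩
  rw [Measure.map_map U.continuous.measurable (by fun_prop)]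
  conv_rhs => rw [← hσ V, Measure.map_map (by fun_prop) hVm]
  congr 1
  exact funext hV

end EuclideanSpace

namespace IsUniformSphereMeasure

variable {d : ℕ} {σ : Measure (Fin d → ℂ)}

lemma ae_norm_toLp_eq_one (hσ : IsUniformSphereMeasure d σ) :
    ∀ᵐ x ∂σ, ‖WithLp.toLp 2 x‖ = 1 := by
  have hsphere : ∀ᵐ x ∂σ, x ∈ unitSphere d := hσ.2.1
  filter_upwards [hsphere] with x hx
  rw [EuclideanSpace.norm_eq, Real.sqrt_eq_one, ← hx]
  simp [cnormSq, Complex.sq_norm]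

lemma ne_zero (hσ : IsUniformSphereMeasure d σ) : d ≠ 0 := by
  rintro rfl
  have := hσ.1
  obtain ⟨x, hx⟩ := hσ.ae_norm_toLp_eq_one.exists
  simp [EuclideanSpace.norm_eq] at hx

end IsUniformSphereMeasure

theorem second_moment_quadratic_form_uniform_sphere_general {d : ℕ} {σ : Measure (Fin d → ℂ)}
    (hσ : IsUniformSphereMeasure d σ) (A B : Matrix (Fin d) (Fin d) ℂ) :
    ∫ x, (star x ⬝ᵥ A *ᵥ x) * (star x ⬝ᵥ B *ᵥ x) ∂σ =
      ((A * B).trace + A.trace * B.trace) / (d * (d + 1)) := by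
  have := hσ.1
  have hmeas : MeasurableEmbedding (WithLp.toLp 2 : (Fin d → ℂ) → EuclideanSpace ℂ (Fin d)) :=
    (MeasurableEquiv.toLp 2 _).measurableEmbedding
  have hnorm : (fun x ↦ ‖WithLp.toLp 2 x‖ ^ 4) =ᵐ[σ] fun _ ↦ 1 := by
    filter_upwards [hσ.ae_norm_toLp_eq_one] with x hx
    rw [hx, one_pow]
  have hint : Integrable (fun x ↦ ‖x‖ ^ 4) (σ.map (WithLp.toLp 2)) :=
    hmeas.integrable_map_iff.2 ((integrable_const 1).congr hnorm.symm)
  have key := (isUnitarilyInvariant_map_toLp hσ.2.2).integral_inner_mul_inner hint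
    (toEuclideanCLM (𝕜 := ℂ) A) (toEuclideanCLM (𝕜 := ℂ) B)
  rw [hmeas.integral_map, hmeas.integral_map] at key
  simp only [inner_toLp_toEuclideanCLM_toLp, ← map_mul, trace_toEuclideanCLM,
    finrank_euclideanSpace_fin, integral_congr_ae hnorm] at key
  have hd' : (d : ℂ) ≠ 0 := Nat.cast_ne_zero.2 hσ.ne_zero
  rw [eq_div_iff (mul_ne_zero hd' d.cast_add_one_ne_zero), mul_comm, key]
  simp [add_comm]

/-- The second moment of the quadratic form `u*Θu` for `u` uniform on
the unit sphere of `ℂ^d`: `E[(u*Θu)²] = (tr(Θ²) + (tr Θ)²)/(d(d+1))`. -/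
theorem second_moment_quadratic_form_uniform_sphere
    {d : ℕ} (hd : 1 ≤ d)
    (σ : Measure (Fin d → ℂ)) (hσ : IsUniformSphereMeasure d σ)
    (Θ : Matrix (Fin d) (Fin d) ℂ) (hΘ : Θ.IsHermitian) :
    (∀ x : Fin d → ℂ, (star x ⬝ᵥ Θ.mulVec x).im = 0) ∧
    ∫ x, ((star x ⬝ᵥ Θ.mulVec x).re) ^ 2 ∂σ =
      ((Θ * Θ).trace.re + (Θ.trace.re) ^ 2) / (d * (d + 1)) := by
  have hreal (x : Fin d → ℂ) : (star x ⬝ᵥ Θ *ᵥ x).im = 0 := hΘ.im_star_dotProduct_mulVec_self x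
  have hsq : (Θ * Θ).IsHermitian := by simpa [hΘ.eq] using isHermitian_mul_conjTranspose_self Θ
  refine ⟨hreal, Complex.ofReal_injective ?_⟩
  calc ((∫ x, (star x ⬝ᵥ Θ *ᵥ x).re ^ 2 ∂σ : ℝ) : ℂ)
      = ∫ x, (star x ⬝ᵥ Θ *ᵥ x) * (star x ⬝ᵥ Θ *ᵥ x) ∂σ := by
        rw [← integral_complex_ofReal]
        congr with x : 1
        have hx : ((star x ⬝ᵥ Θ *ᵥ x).re : ℂ) = star x ⬝ᵥ Θ *ᵥ x := Complex.ext rfl (hreal x).symm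
        rw [Complex.ofReal_pow, hx, sq]
    _ = ((((Θ * Θ).trace.re + Θ.trace.re ^ 2) / (d * (d + 1)) : ℝ) : ℂ) := by
        rw [second_moment_quadratic_form_uniform_sphere_general hσ]
        push_cast
        rw [ofReal_re_trace_of_isHermitian hsq, ofReal_re_trace_of_isHermitian hΘ, sq]
end
end

section
/- Let ν be a Borel measure on ℝ∖{0} with ∫ min(1, r²) ν(dr) < ∞, and let ν_d be the pushforward of ν ⊗ σ_d under (r,u) ↦ r·uu*. Then for every ε > 0 and every d×d complex Hermitian matrix Θ, ∫_{‖ξ‖ ≤ ε} (tr(Θξ))² ν_d(dξ) = ( ∫_{|r| ≤ ε} r² ν(dr) ) · (tr(Θ²) + (tr(Θ))²) / (d(d+1)), where ‖·‖ is the Frobenius norm and tr(Θξ) is real for Hermitian Θ, ξ. -/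
open MeasureTheory Matrix
open scoped ComplexOrder

noncomputable section

/-- Frobenius norm of a complex matrix, ‖A‖ = (tr(AA*))^{1/2}. -/
def frobNorm {d q : ℕ} (A : Matrix (Fin d) (Fin q) ℂ) : ℝ :=
  Real.sqrt ((A * Aᴴ).trace.re)

/-! Let `ξ = xx*` with `x` uniform on the unit sphere. Invariance under diagonal phases kills every
moment `𝔼[ξᵢⱼ ξₖₗ]` except `𝔼[ξᵢᵢ ξₖₖ] = 𝔼[ξᵢₖ ξₖᵢ]`. Transpositions make all `𝔼[ξᵢᵢ ξᵢᵢ]` equal,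
and the rotation `(1 + I • swap i j) / √2` shows that they are twice the `𝔼[ξᵢᵢ ξⱼⱼ]` with `i ≠ j`.
The normalisation `tr ξ = 1` fixes the remaining constant, so
`𝔼[ξᵢⱼ ξₖₗ] = (δᵢⱼ δₖₗ + δᵢₗ δₖⱼ) / (d (d + 1))`, and by bilinearity
`𝔼[tr (A ξ) tr (B ξ)] = (tr (A B) + tr A tr B) / (d (d + 1))`. Since `‖r • uu*‖ = |r|` for a unit
vector `u`, truncating `ν_d` at `ε` amounts to truncating `ν`, and the integral factorises. -/

instance matrixBorelSpace {d q : ℕ} : BorelSpace (Matrix (Fin d) (Fin q) ℂ) :=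
  inferInstanceAs (BorelSpace (Fin d → Fin q → ℂ))

section LevyMeasure

theorem sFinite_of_lintegral_ne_top {α : Type*} [MeasurableSpace α] {μ : Measure α}
    {f : α → ENNReal} (hf : AEMeasurable f μ) (hint : ∫⁻ x, f x ∂μ ≠ ⊤)
    (hne : ∀ᵐ x ∂μ, f x ≠ 0) : SFinite μ :=
  have := isFiniteMeasure_withDensity hint
  sFinite_of_absolutelyContinuous (withDensity_absolutelyContinuous' hf hne)

variable {ν : Measure ℝ}

theorem sFinite_of_lintegral_min_one_sq (hν0 : ν {0} = 0)
    (hν : ∫⁻ r, ENNReal.ofReal (min 1 (r ^ 2)) ∂ν < ⊤) : SFinite ν := by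
  refine sFinite_of_lintegral_ne_top (by fun_prop) hν.ne ?_
  filter_upwards [compl_mem_ae_iff.mpr hν0] with r hr
  have hr0 : r ≠ 0 := hr
  exact (ENNReal.ofReal_pos.mpr (by positivity)).ne'

theorem sq_le_max_mul_min_one_sq {r ε : ℝ} (hr : |r| ≤ ε) :
    r ^ 2 ≤ max 1 (ε ^ 2) * min 1 (r ^ 2) := by
  rcases le_total (r ^ 2) 1 with h | h
  · rw [min_eq_right h]
    exact le_mul_of_one_le_left (sq_nonneg r) (le_max_left ..)
  · rw [min_eq_left h, mul_one]
    exact le_max_of_le_right (sq_le_sq.mpr (hr.trans (le_abs_self ε)))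

theorem integrableOn_sq_of_lintegral_min_one_sq
    (hν : ∫⁻ r, ENNReal.ofReal (min 1 (r ^ 2)) ∂ν < ⊤) (ε : ℝ) :
    IntegrableOn (fun r => r ^ 2) {r | |r| ≤ ε} ν := by
  have hmin : Integrable (fun r : ℝ => min 1 (r ^ 2)) ν :=
    ⟨by fun_prop, (hasFiniteIntegral_iff_ofReal (.of_forall fun r => by positivity)).mpr hν⟩
  have hset : MeasurableSet {r : ℝ | |r| ≤ ε} := measurableSet_le (by fun_prop) (by fun_prop)
  refine (hmin.integrableOn.const_mul (max 1 (ε ^ 2))).mono' (by fun_prop) ?_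
  filter_upwards [ae_restrict_mem hset] with r hr
  rw [Real.norm_of_nonneg (sq_nonneg r)]
  exact sq_le_max_mul_min_one_sq hr

end LevyMeasure

section RankOne

variable {d : ℕ}

@[fun_prop]
theorem continuous_outer {X : Type*} [TopologicalSpace X] {f g : X → Fin d → ℂ}
    (hf : Continuous f) (hg : Continuous g) : Continuous fun x => outer (f x) (g x) := by
  unfold outer
  fun_prop

theorem outer_self_apply (x : Fin d → ℂ) (i j : Fin d) : outer x x i j = x i * star (x j) :=
  vecMulVec_apply ..

theorem isHermitian_outer_self (x : Fin d → ℂ) : (outer x x).IsHermitian := by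
  simp [Matrix.IsHermitian, outer, conjTranspose_vecMulVec]

theorem trace_outer_self (x : Fin d → ℂ) : (outer x x).trace = cnormSq x := by
  simp [outer, trace_vecMulVec, dotProduct, cnormSq, Complex.mul_conj]

theorem outer_self_mul_outer_self (x : Fin d → ℂ) :
    outer x x * outer x x = (cnormSq x : ℂ) • outer x x := by
  rw [← trace_outer_self]
  simp [outer, vecMulVec_mul_vecMulVec, trace_vecMulVec, dotProduct_comm]

theorem frobNorm_smul_outer_self (r : ℝ) {x : Fin d → ℂ} (hx : x ∈ unitSphere d) :
    frobNorm ((r : ℂ) • outer x x) = |r| := by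
  have hx1 : cnormSq x = 1 := hx
  simp [frobNorm, (isHermitian_outer_self x).eq, outer_self_mul_outer_self, trace_outer_self, hx1,
    Real.sqrt_mul_self_eq_abs]

theorem isCompact_unitSphere (d : ℕ) : IsCompact (unitSphere d) := by
  have hcont : Continuous (cnormSq (d := d)) := by
    unfold cnormSq
    fun_prop
  refine Metric.isCompact_of_isClosed_isBounded (isClosed_eq hcont continuous_const)
    (Metric.isBounded_closedBall.subset (t := Metric.closedBall 0 1) fun x hx => ?_)
  have hx1 : cnormSq x = 1 := hx
  refine mem_closedBall_zero_iff.mpr ((pi_norm_le_iff_of_nonneg zero_le_one).mpr fun i => ?_)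
  rw [← sq_le_one_iff₀ (norm_nonneg _), ← Complex.normSq_eq_norm_sq, ← hx1]
  exact Finset.single_le_sum (fun j _ => Complex.normSq_nonneg (x j)) (Finset.mem_univ i)

end RankOne

section ComplexMatrix

variable {n : Type*} [Fintype n]

theorem ofReal_re_trace_mul {A B : Matrix n n ℂ} (hA : A.IsHermitian) (hB : B.IsHermitian) :
    ((A * B).trace.re : ℂ) = (A * B).trace := by
  rw [← Complex.conj_eq_iff_re, starRingEnd_apply, ← trace_conjTranspose, conjTranspose_mul, hA.eq,
    hB.eq, trace_mul_comm]

variable [DecidableEq n]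

theorem diagonal_mem_unitaryGroup {z : n → ℂ} (hz : ∀ i, z i * star (z i) = 1) :
    diagonal z ∈ unitaryGroup n ℂ := by
  rw [mem_unitaryGroup_iff, star_eq_conjTranspose, diagonal_conjTranspose, diagonal_mul_diagonal,
    ← diagonal_one]
  exact congrArg diagonal (funext hz)

theorem swap_mem_unitaryGroup (i j : n) : Matrix.swap ℂ i j ∈ unitaryGroup n ℂ := by
  rw [mem_unitaryGroup_iff, star_eq_conjTranspose, conjTranspose_swap, swap_mul_self]

theorem inv_sqrt_two_mul_self : ((√2 : ℝ) : ℂ)⁻¹ * ((√2 : ℝ) : ℂ)⁻¹ = 2⁻¹ := by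
  rw [← mul_inv, ← Complex.ofReal_mul, Real.mul_self_sqrt zero_le_two, Complex.ofReal_ofNat]

/-- The unitary `(1 + I • swap i j) / √2`, a square root of `I • swap i j`: the rotation that
relates the diagonal and off-diagonal entries of `xx*` at `i` and `j`. -/
def rootSwap (i j : n) : Matrix n n ℂ :=
  ((√2 : ℝ) : ℂ)⁻¹ • (1 + Complex.I • Matrix.swap ℂ i j)

theorem rootSwap_mem_unitaryGroup (i j : n) : rootSwap i j ∈ unitaryGroup n ℂ := by
  have hprod : (1 + Complex.I • Matrix.swap ℂ i j) * star (1 + Complex.I • Matrix.swap ℂ i j) =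
      (2 : ℂ) • 1 := by
    simp only [star_add, star_one, star_smul, star_eq_conjTranspose (Matrix.swap ℂ i j),
      conjTranspose_swap, add_mul, mul_add, smul_mul_smul_comm, swap_mul_self, Complex.star_def,
      Complex.conj_I, mul_neg, Complex.I_mul_I, one_mul, mul_one]
    module
  rw [rootSwap, mem_unitaryGroup_iff, star_smul, smul_mul_smul_comm, hprod, smul_smul,
    Complex.star_def, map_inv₀, Complex.conj_ofReal, inv_sqrt_two_mul_self,
    inv_mul_cancel₀ two_ne_zero, one_smul]

end ComplexMatrix

theorem outer_rootSwap_mulVec_sub {d : ℕ} (i j : Fin d) (x : Fin d → ℂ) :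
    outer (rootSwap i j *ᵥ x) (rootSwap i j *ᵥ x) i i -
        outer (rootSwap i j *ᵥ x) (rootSwap i j *ᵥ x) j j =
      Complex.I * (outer x x j i - outer x x i j) := by
  simp only [rootSwap, outer_self_apply, add_mulVec, smul_mulVec, swap_mulVec, one_mulVec,
    Pi.smul_apply, Pi.add_apply, Function.comp_apply, Equiv.swap_apply_left,
    Equiv.swap_apply_right, smul_eq_mul, star_mul', star_add, star_inv₀, Complex.star_def,
    Complex.conj_ofReal, Complex.conj_I]
  linear_combination (2 * Complex.I * (x j * (starRingEnd ℂ) (x i) -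
    x i * (starRingEnd ℂ) (x j))) * inv_sqrt_two_mul_self +
    ((√2 : ℝ) : ℂ)⁻¹ ^ 2 * (x i * (starRingEnd ℂ) (x i) - x j * (starRingEnd ℂ) (x j)) *
      Complex.I_sq

/-- The moment `𝔼[ξᵢⱼ ξₖₗ]`, of fourth order in `x ∼ σ`, where `ξ = xx*`. -/
def fourthMoment {d : ℕ} (σ : Measure (Fin d → ℂ)) (i j k l : Fin d) : ℂ :=
  ∫ x, outer x x i j * outer x x k l ∂σ

section FourthMoment

variable {d : ℕ} (σ : Measure (Fin d → ℂ)) (i j k l : Fin d)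

theorem fourthMoment_swap_pairs : fourthMoment σ i j k l = fourthMoment σ k l i j := by
  simp only [fourthMoment, mul_comm]

theorem fourthMoment_swap_right : fourthMoment σ i j k l = fourthMoment σ i l k j := by
  simp only [fourthMoment, outer_self_apply]
  congr! 2
  ring

theorem star_fourthMoment : star (fourthMoment σ i j k l) = fourthMoment σ j i l k := by
  simp only [fourthMoment, outer_self_apply, Complex.star_def, ← integral_conj]
  congr! 2
  simp [mul_comm]

end FourthMoment

namespace IsUniformSphereMeasure

variable {d : ℕ} {σ : Measure (Fin d → ℂ)} {i j k l : Fin d}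

theorem ae_mem_unitSphere (hσ : IsUniformSphereMeasure d σ) : ∀ᵐ x ∂σ, x ∈ unitSphere d :=
  mem_ae_iff.mpr hσ.2.1

theorem integrable_of_continuous {E : Type*} [NormedAddCommGroup E]
    (hσ : IsUniformSphereMeasure d σ) {f : (Fin d → ℂ) → E} (hf : Continuous f) :
    Integrable f σ := by
  have := hσ.1
  rw [← Measure.restrict_eq_self_of_ae_mem hσ.ae_mem_unitSphere]
  exact hf.continuousOn.integrableOn_compact (isCompact_unitSphere d)

theorem integral_comp_mulVec {E : Type*} [NormedAddCommGroup E] [NormedSpace ℝ E]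
    (hσ : IsUniformSphereMeasure d σ) {U : Matrix (Fin d) (Fin d) ℂ}
    (hU : U ∈ unitaryGroup (Fin d) ℂ) {f : (Fin d → ℂ) → E} (hf : Continuous f) :
    ∫ x, f (U *ᵥ x) ∂σ = ∫ x, f x ∂σ := by
  conv_rhs => rw [← hσ.2.2 ⟨U, hU⟩]
  have hmeas : Measurable fun x => U *ᵥ x := Continuous.measurable (by fun_prop)
  exact (integral_map hmeas.aemeasurable hf.aestronglyMeasurable).symm

theorem fourthMoment_eq_phase_mul (hσ : IsUniformSphereMeasure d σ) {z : Fin d → ℂ}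
    (hz : ∀ i, z i * star (z i) = 1) (i j k l : Fin d) :
    fourthMoment σ i j k l = z i * star (z j) * (z k * star (z l)) * fourthMoment σ i j k l := by
  conv_lhs => rw [fourthMoment, ← hσ.integral_comp_mulVec (diagonal_mem_unitaryGroup hz)
    (by fun_prop)]
  rw [fourthMoment, ← integral_const_mul]
  congr! 2
  simp only [outer_self_apply, mulVec_diagonal, star_mul']
  ring

-- Multiplying the coordinate `x i` by the phase `I` multiplies the moment by `I` or by `I ^ 2`.
theorem fourthMoment_eq_zero_of_left (hσ : IsUniformSphereMeasure d σ) (hij : i ≠ j)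
    (hil : i ≠ l) : fourthMoment σ i j k l = 0 := by
  refine eq_zero_of_mul_eq_self_left ?_ (hσ.fourthMoment_eq_phase_mul
    (z := Function.update 1 i Complex.I) (fun p => ?_) i j k l).symm
  · rcases eq_or_ne k i with rfl | hki
    · norm_num [hij.symm, hil.symm]
    · simp [hij.symm, hil.symm, hki, Complex.ext_iff]
  · rcases eq_or_ne p i with rfl | hp <;> simp [*]

theorem fourthMoment_eq_zero_of_right (hσ : IsUniformSphereMeasure d σ) (hli : l ≠ i)
    (hlk : l ≠ k) : fourthMoment σ i j k l = 0 := by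
  rw [← star_eq_zero, star_fourthMoment, fourthMoment_swap_pairs]
  exact hσ.fourthMoment_eq_zero_of_left hlk hli

theorem fourthMoment_eq_zero (hσ : IsUniformSphereMeasure d σ) (hdiag : ¬(i = j ∧ k = l))
    (hcross : ¬(i = l ∧ k = j)) : fourthMoment σ i j k l = 0 := by
  by_cases hi : i ≠ j ∧ i ≠ l
  · exact hσ.fourthMoment_eq_zero_of_left hi.1 hi.2
  by_cases hk : k ≠ l ∧ k ≠ j
  · rw [fourthMoment_swap_pairs]
    exact hσ.fourthMoment_eq_zero_of_left hk.1 hk.2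
  by_cases hl : l ≠ i ∧ l ≠ k
  · exact hσ.fourthMoment_eq_zero_of_right hl.1 hl.2
  · rw [fourthMoment_swap_pairs]
    exact hσ.fourthMoment_eq_zero_of_right (by grind) (by grind)

theorem fourthMoment_self_eq (hσ : IsUniformSphereMeasure d σ) (i j : Fin d) :
    fourthMoment σ i i i i = fourthMoment σ j j j j := by
  rw [fourthMoment, ← hσ.integral_comp_mulVec (swap_mem_unitaryGroup i j) (by fun_prop)]
  simp [fourthMoment, outer_self_apply]

-- By invariance `ξᵢᵢ - ξⱼⱼ` and its image `I (ξⱼᵢ - ξᵢⱼ)` under `rootSwap i j` have equal second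
-- moments.
theorem fourthMoment_self_add_self (hσ : IsUniformSphereMeasure d σ) (hij : i ≠ j) :
    fourthMoment σ i i i i + fourthMoment σ j j j j = 4 * fourthMoment σ i i j j := by
  have hint (a b c e : Fin d) : Integrable (fun x => outer x x a b * outer x x c e) σ :=
    hσ.integrable_of_continuous (by fun_prop)
  have hbefore : ∫ x, (outer x x i i - outer x x j j) ^ 2 ∂σ =
      fourthMoment σ i i i i + fourthMoment σ j j j j - 2 * fourthMoment σ i i j j := by
    simp only [fourthMoment]
    rw [← integral_add (hint ..) (hint ..), ← integral_const_mul,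
      ← integral_sub ((hint ..).fun_add (hint ..)) ((hint ..).const_mul _)]
    congr! 2
    ring
  have hafter : ∫ x, (Complex.I * (outer x x j i - outer x x i j)) ^ 2 ∂σ =
      2 * fourthMoment σ i i j j - fourthMoment σ i j i j - fourthMoment σ j i j i := by
    simp only [fourthMoment]
    rw [← integral_const_mul, ← integral_sub ((hint ..).const_mul _) (hint ..),
      ← integral_sub (((hint ..).const_mul _).sub' (hint ..)) (hint ..)]
    congr! 2
    simp only [outer_self_apply, mul_pow, Complex.I_sq]
    ring
  have hinv := hσ.integral_comp_mulVec (rootSwap_mem_unitaryGroup i j)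
    (f := fun x => (outer x x i i - outer x x j j) ^ 2) (by fun_prop)
  simp only [outer_rootSwap_mulVec_sub] at hinv
  rw [hbefore, hafter, hσ.fourthMoment_eq_zero_of_left hij hij,
    hσ.fourthMoment_eq_zero_of_left hij.symm hij.symm] at hinv
  linear_combination -hinv

theorem integral_trace_mul_trace_eq_sum (hσ : IsUniformSphereMeasure d σ)
    (A B : Matrix (Fin d) (Fin d) ℂ) :
    ∫ x, (A * outer x x).trace * (B * outer x x).trace ∂σ =
      ∑ i, ∑ j, ∑ k, ∑ l, A i j * B k l * fourthMoment σ j i l k := by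
  have hexpand (x : Fin d → ℂ) : (A * outer x x).trace * (B * outer x x).trace =
      ∑ i, ∑ j, ∑ k, ∑ l, A i j * B k l * (outer x x j i * outer x x l k) := by
    simp only [trace, diag_apply, mul_apply, Finset.sum_mul_sum]
    refine Finset.sum_congr rfl fun i _ => ?_
    rw [Finset.sum_comm]
    simp only [mul_mul_mul_comm]
  simp only [hexpand, fourthMoment, ← integral_const_mul]
  iterate 3
    rw [integral_finsetSum _ fun _ _ => hσ.integrable_of_continuous (by fun_prop)]
    refine Finset.sum_congr rfl fun _ _ => ?_
  exact integral_finsetSum _ fun _ _ => hσ.integrable_of_continuous (by fun_prop)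

theorem sum_fourthMoment (hσ : IsUniformSphereMeasure d σ) :
    ∑ i, ∑ k, fourthMoment σ i i k k = 1 := by
  have := hσ.1
  have htrace : ∀ᵐ x ∂σ, ((1 : Matrix (Fin d) (Fin d) ℂ) * outer x x).trace *
      ((1 : Matrix (Fin d) (Fin d) ℂ) * outer x x).trace = 1 := by
    filter_upwards [hσ.ae_mem_unitSphere] with x hx
    have hx1 : cnormSq x = 1 := hx
    simp [trace_outer_self, hx1]
  have hsum := hσ.integral_trace_mul_trace_eq_sum 1 1
  rw [integral_congr_ae htrace] at hsum
  simpa [one_apply] using hsum.symm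

theorem fourthMoment_diag_eq_mul_half (hσ : IsUniformSphereMeasure d σ) (p i k : Fin d) :
    fourthMoment σ i i k k =
      (1 + (1 : Matrix (Fin d) (Fin d) ℂ) i k) * (fourthMoment σ p p p p / 2) := by
  have hi := hσ.fourthMoment_self_eq i p
  have hk := hσ.fourthMoment_self_eq k p
  rcases eq_or_ne i k with rfl | hik
  · rw [one_apply_eq]
    linear_combination hi
  · rw [one_apply_ne hik]
    linear_combination (hi + hk - hσ.fourthMoment_self_add_self hik) / 4

theorem fourthMoment_diag (hσ : IsUniformSphereMeasure d σ) (i k : Fin d) :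
    fourthMoment σ i i k k = (1 + (1 : Matrix (Fin d) (Fin d) ℂ) i k) / (d * (d + 1)) := by
  have hnorm : ∑ p, ∑ q, (1 + (1 : Matrix (Fin d) (Fin d) ℂ) p q) *
      (fourthMoment σ i i i i / 2) = 1 := by
    refine Eq.trans ?_ hσ.sum_fourthMoment
    congr! with p - q -
    exact (hσ.fourthMoment_diag_eq_mul_half i p q).symm
  simp only [← Finset.sum_mul, Finset.sum_add_distrib, one_apply, Finset.sum_ite_eq,
    Finset.mem_univ, if_true, Finset.sum_const, Finset.card_univ, Fintype.card_fin, nsmul_eq_mul,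
    mul_one] at hnorm
  have hd : (d * (d + 1) : ℂ) ≠ 0 := left_ne_zero_of_mul_eq_one
    (b := fourthMoment σ i i i i / 2) (by linear_combination hnorm)
  rw [hσ.fourthMoment_diag_eq_mul_half i, eq_div_iff hd]
  linear_combination (1 + (1 : Matrix (Fin d) (Fin d) ℂ) i k) * hnorm

theorem fourthMoment_eq (hσ : IsUniformSphereMeasure d σ) (i j k l : Fin d) :
    fourthMoment σ i j k l =
      ((1 : Matrix (Fin d) (Fin d) ℂ) i j * (1 : Matrix (Fin d) (Fin d) ℂ) k l +
        (1 : Matrix (Fin d) (Fin d) ℂ) i l * (1 : Matrix (Fin d) (Fin d) ℂ) k j) /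
          (d * (d + 1)) := by
  by_cases hdiag : i = j ∧ k = l
  · obtain ⟨rfl, rfl⟩ := hdiag
    simp [hσ.fourthMoment_diag, one_apply, ← ite_and, eq_comm]
  by_cases hcross : i = l ∧ k = j
  · obtain ⟨rfl, rfl⟩ := hcross
    simp [fourthMoment_swap_right σ i k, hσ.fourthMoment_diag, one_apply, ← ite_and, eq_comm,
      add_comm]
  · rw [hσ.fourthMoment_eq_zero hdiag hcross]
    grind [Matrix.one_apply]

theorem integral_trace_mul_trace (hσ : IsUniformSphereMeasure d σ)
    (A B : Matrix (Fin d) (Fin d) ℂ) :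
    ∫ x, (A * outer x x).trace * (B * outer x x).trace ∂σ =
      ((A * B).trace + A.trace * B.trace) / (d * (d + 1)) := by
  simp only [hσ.integral_trace_mul_trace_eq_sum, hσ.fourthMoment_eq, mul_div_assoc',
    ← Finset.sum_div]
  congr 1
  simp [mul_add, Finset.sum_add_distrib, one_apply, trace, mul_apply, Finset.sum_mul_sum, add_comm]

end IsUniformSphereMeasure

/-- The measure `ν_d` of the paper: the pushforward of `ν ⊗ σ` under `(r, u) ↦ r • uu*`. -/
def rankOnePushforward {d : ℕ} (ν : Measure ℝ) (σ : Measure (Fin d → ℂ)) :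
    Measure (Matrix (Fin d) (Fin d) ℂ) :=
  (ν.prod σ).map fun p => (p.1 : ℂ) • outer p.2 p.2

section Pushforward

variable {d : ℕ} {ν : Measure ℝ} {σ : Measure (Fin d → ℂ)}

theorem measurable_smul_outer (d : ℕ) :
    Measurable fun p : ℝ × (Fin d → ℂ) => (p.1 : ℂ) • outer p.2 p.2 :=
  Continuous.measurable (by fun_prop)

theorem ae_isHermitian_rankOnePushforward :
    ∀ᵐ ξ ∂rankOnePushforward ν σ, ξ.IsHermitian := by
  have hmeas : MeasurableSet {ξ : Matrix (Fin d) (Fin d) ℂ | ξ.IsHermitian} :=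
    (isClosed_eq (by fun_prop) continuous_id).measurableSet
  refine (ae_map_iff (measurable_smul_outer d).aemeasurable hmeas).mpr (.of_forall fun p => ?_)
  simp [Matrix.IsHermitian, (isHermitian_outer_self p.2).eq]

theorem measurableSet_frobNorm_le (d : ℕ) (ε : ℝ) :
    MeasurableSet {ξ : Matrix (Fin d) (Fin d) ℂ | frobNorm ξ ≤ ε} := by
  have hcont : Continuous fun ξ : Matrix (Fin d) (Fin d) ℂ => frobNorm ξ := by
    unfold frobNorm
    fun_prop
  exact (isClosed_le hcont continuous_const).measurableSet

theorem restrict_rankOnePushforward [SFinite ν] (hσ : IsUniformSphereMeasure d σ) (ε : ℝ) :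
    (rankOnePushforward ν σ).restrict {ξ | frobNorm ξ ≤ ε} =
      rankOnePushforward (ν.restrict {r | |r| ≤ ε}) σ := by
  have := hσ.1
  have hpre : (fun p : ℝ × (Fin d → ℂ) => (p.1 : ℂ) • outer p.2 p.2) ⁻¹' {ξ | frobNorm ξ ≤ ε}
      =ᵐ[ν.prod σ] {r | |r| ≤ ε} ×ˢ Set.univ := by
    filter_upwards [Measure.quasiMeasurePreserving_snd.ae hσ.ae_mem_unitSphere] with p hp
    refine propext ?_
    change frobNorm ((p.1 : ℂ) • outer p.2 p.2) ≤ ε ↔ |p.1| ≤ ε ∧ True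
    rw [frobNorm_smul_outer_self p.1 hp, and_true]
  rw [rankOnePushforward, Measure.restrict_map (measurable_smul_outer d)
    (measurableSet_frobNorm_le d ε), Measure.restrict_congr_set hpre, ← Measure.prod_restrict,
    Measure.restrict_univ, rankOnePushforward]

theorem ofReal_integral_re_trace_mul_sq {μ : Measure (Matrix (Fin d) (Fin d) ℂ)}
    (hμ : ∀ᵐ ξ ∂μ, ξ.IsHermitian) {A : Matrix (Fin d) (Fin d) ℂ} (hA : A.IsHermitian) :
    ((∫ ξ, (A * ξ).trace.re ^ 2 ∂μ : ℝ) : ℂ) = ∫ ξ, (A * ξ).trace * (A * ξ).trace ∂μ := by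
  rw [← integral_complex_ofReal]
  refine integral_congr_ae ?_
  filter_upwards [hμ] with ξ hξ
  rw [Complex.ofReal_pow, ofReal_re_trace_mul hA hξ, sq]

theorem truncated_second_moment_pushforward_general [SFinite ν]
    (hσ : IsUniformSphereMeasure d σ) {ε : ℝ}
    (hν : IntegrableOn (fun r => r ^ 2) {r | |r| ≤ ε} ν) (A B : Matrix (Fin d) (Fin d) ℂ) :
    IntegrableOn (fun ξ => (A * ξ).trace * (B * ξ).trace) {ξ | frobNorm ξ ≤ ε}
        (rankOnePushforward ν σ) ∧
      ∫ ξ in {ξ | frobNorm ξ ≤ ε}, (A * ξ).trace * (B * ξ).trace ∂rankOnePushforward ν σ =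
        (∫ r in {r | |r| ≤ ε}, r ^ 2 ∂ν : ℝ) *
          (((A * B).trace + A.trace * B.trace) / (d * (d + 1))) := by
  have := hσ.1
  have hcont : Continuous fun ξ : Matrix (Fin d) (Fin d) ℂ => (A * ξ).trace * (B * ξ).trace := by
    fun_prop
  have hscale (p : ℝ × (Fin d → ℂ)) :
      (A * ((p.1 : ℂ) • outer p.2 p.2)).trace * (B * ((p.1 : ℂ) • outer p.2 p.2)).trace =
        ((p.1 ^ 2 : ℝ) : ℂ) * ((A * outer p.2 p.2).trace * (B * outer p.2 p.2).trace) := by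
    simp only [Matrix.mul_smul, trace_smul, smul_eq_mul, Complex.ofReal_pow]
    ring
  rw [IntegrableOn, restrict_rankOnePushforward hσ, rankOnePushforward,
    integrable_map_measure hcont.aestronglyMeasurable (measurable_smul_outer d).aemeasurable,
    integral_map (measurable_smul_outer d).aemeasurable hcont.aestronglyMeasurable]
  simp only [Function.comp_def, hscale]
  refine ⟨hν.ofReal.mul_prod (hσ.integrable_of_continuous
    (f := fun x => (A * outer x x).trace * (B * outer x x).trace) (by fun_prop)), ?_⟩
  rw [integral_prod_mul (fun r : ℝ => ((r ^ 2 : ℝ) : ℂ))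
    (fun x : Fin d → ℂ => (A * outer x x).trace * (B * outer x x).trace),
    hσ.integral_trace_mul_trace, integral_complex_ofReal]

end Pushforward

/-- Truncated second moment of `tr(Θξ)` under the pushforward measure
`ν_d`: `∫_{‖ξ‖≤ε} (tr(Θξ))² ν_d(dξ) = (∫_{|r|≤ε} r² ν(dr)) (tr(Θ²)+(tr Θ)²)/(d(d+1))`. -/
theorem truncated_second_moment_pushforward
    {d : ℕ} (hd : 1 ≤ d)
    (ν : Measure ℝ) (hν0 : ν {0} = 0)
    (hνint : ∫⁻ r, ENNReal.ofReal (min 1 (r ^ 2)) ∂ν < ⊤)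
    (σ : Measure (Fin d → ℂ)) (hσ : IsUniformSphereMeasure d σ)
    (νd : Measure (Matrix (Fin d) (Fin d) ℂ))
    (hνd : νd = (ν.prod σ).map (fun p => ((p.1 : ℝ) : ℂ) • outer p.2 p.2)) :
    ∀ ε > (0 : ℝ), ∀ (Θ : Matrix (Fin d) (Fin d) ℂ), Θ.IsHermitian →
      ∫ ξ in {ξ : Matrix (Fin d) (Fin d) ℂ | frobNorm ξ ≤ ε},
          ((Θ * ξ).trace.re) ^ 2 ∂νd =
        (∫ r in {r : ℝ | |r| ≤ ε}, r ^ 2 ∂ν) *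
          (((Θ * Θ).trace.re + (Θ.trace.re) ^ 2) / (d * (d + 1))) := by
  intro ε _ Θ hΘ
  have := sFinite_of_lintegral_min_one_sq hν0 hνint
  have hmoment := (truncated_second_moment_pushforward_general hσ
    (integrableOn_sq_of_lintegral_min_one_sq hνint ε) Θ Θ).2
  have htrace : (Θ.trace.re : ℂ) = Θ.trace := by simpa using ofReal_re_trace_mul hΘ isHermitian_one
  rw [← ofReal_integral_re_trace_mul_sq (ae_restrict_of_ae ae_isHermitian_rankOnePushforward) hΘ,
    ← ofReal_re_trace_mul hΘ hΘ, ← htrace, ← sq (Θ.trace.re : ℂ)] at hmoment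
  subst hνd
  exact_mod_cast hmoment
end
end
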